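/- Hyperbolic Ingham-type inequality (upper and lower bounds): Let {λ_n^j}_{(n,j) ∈ ℤ* × {1,2,3}} be complex numbers satisfying λ_n^j = -ω_j + i β_j n + O(1/|n|) with β_1, β_2, β_3 distinct nonzero reals and ω_1, ω_2, ω_3 distinct reals, and assume all λ_n^j are pairwise distinct. Then for any T > 2π(1/|β_1| + 1/|β_2| + 1/|β_3|) there exist constants C_1, C_2 > 0 such that for every finite family of complex numbers {a_n^j}, C_1 Σ |a_n^j|^2 ≤ ∫_{-T/2}^{T/2} |Σ a_n^j e^{-conj(λ_n^j) t}|^2 dt ≤ C_2 Σ |a_n^j|^2. -/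

import Mathlib

/-!
Put `μ_n^j = -conj(λ_n^j)`. These exponents are `O(1/|n|)`-perturbations of the model exponents
`ω_j + i β_j n`, and the proof treats the model, the perturbation, and finitely many exceptional
exponents separately.

*Model.* Each branch `j` is, up to the factor `e^{ω_j t}`, periodic with period
`τ_j = 2π/|β_j|`, so Parseval's identity gives the upper inequality on any interval
(`model_upper`). For the lower one, the operator `f ↦ f(· + τ_j) - e^{ω_j τ_j} f` annihilates the
branch `j` and multiplies every coefficient of another branch `l` by a number of modulus at least
`|e^{ω_l τ_j} - e^{ω_j τ_j}|`, which is positive because the `ω_j` are distinct. Applying two such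
operators isolates one branch, consumes a length `τ_j + τ_k` of the interval, and leaves an
interval of length `τ_l` for Parseval's identity (`model_branch_lower`, `model_lower`).

*Perturbation.* On a bounded interval `|e^{μ t} - e^{ν t}| = O(1/|n|)` is square summable, so by
Cauchy-Schwarz the upper inequality is inherited (`UpperIneq.perturb`), and so is the lower one
after the removal of finitely many exponents (`LowerIneq.perturb`).

*Exceptional exponents.* These are put back one at a time by Haraux's method
(`LowerIneq.insert`): the operator `f ↦ δ f - ∫_0^δ e^{-ζ s} f(· + s) ds` annihilates `e^{ζ t}`,
lengthens the interval only by `δ`, and has a multiplier bounded away from zero on the other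
exponents, because `e^u - 1 - u` has no zero other than `0` in the strip `|Re u| ≤ 1/2`. The
required gap comes from the distinctness of the exponents together with the growth of their
imaginary parts along each branch (`exists_gap`).
-/

open Complex

/-! ### Exponential sums and their energy -/

/-- The exponential sum `∑_{p ∈ S} a_p e^{μ_p t}`. -/
noncomputable def expSum {ι : Type*} (μ : ι → ℂ) (S : Finset ι) (a : ι → ℂ) (t : ℝ) : ℂ :=
  ∑ p ∈ S, a p * exp (μ p * t)

/-- The energy `∫_0^L |∑_{p ∈ S} a_p e^{μ_p t}|² dt`. -/
noncomputable def energy {ι : Type*} (μ : ι → ℂ) (S : Finset ι) (a : ι → ℂ) (L : ℝ) : ℝ :=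
  ∫ t in (0 : ℝ)..L, ‖expSum μ S a t‖ ^ 2

/-- The exponentials `e^{μ_p t}`, `p ∈ P`, satisfy the upper (Bessel) inequality on `[0, L]`. -/
def UpperIneq {ι : Type*} (μ : ι → ℂ) (P : Set ι) (L : ℝ) : Prop :=
  ∃ K : ℝ, 0 < K ∧ ∀ S : Finset ι, (∀ p ∈ S, p ∈ P) → ∀ a : ι → ℂ,
    energy μ S a L ≤ K * ∑ p ∈ S, ‖a p‖ ^ 2

/-- The exponentials `e^{μ_p t}`, `p ∈ P`, satisfy the lower (Ingham) inequality on `[0, L]`;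
the constant is put on the side of the energy. -/
def LowerIneq {ι : Type*} (μ : ι → ℂ) (P : Set ι) (L : ℝ) : Prop :=
  ∃ K : ℝ, 0 < K ∧ ∀ S : Finset ι, (∀ p ∈ S, p ∈ P) → ∀ a : ι → ℂ,
    ∑ p ∈ S, ‖a p‖ ^ 2 ≤ K * energy μ S a L

section General

variable {ι : Type*} {μ : ι → ℂ} {S : Finset ι} {a : ι → ℂ}

@[fun_prop]
lemma continuous_expSum : Continuous (expSum μ S a) := by
  unfold expSum; fun_prop

lemma intervalIntegrable_expSum (x y : ℝ) :
    IntervalIntegrable (fun t => ‖expSum μ S a t‖ ^ 2) MeasureTheory.volume x y :=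
  (continuous_expSum.norm.pow 2).intervalIntegrable _ _

lemma integral_le_of_le {f g : ℝ → ℝ} (hf : Continuous f) (hg : Continuous g) {L : ℝ}
    (hL : 0 ≤ L) (h : ∀ t ∈ Set.Icc 0 L, f t ≤ g t) :
    ∫ t in (0 : ℝ)..L, f t ≤ ∫ t in (0 : ℝ)..L, g t :=
  intervalIntegral.integral_mono_on hL (hf.intervalIntegrable _ _) (hg.intervalIntegrable _ _) h

lemma energy_nonneg {L : ℝ} (hL : 0 ≤ L) : 0 ≤ energy μ S a L :=
  intervalIntegral.integral_nonneg hL fun _ _ => by positivity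

lemma integral_le_energy {x y L : ℝ} (hx : 0 ≤ x) (hxy : x ≤ y) (hy : y ≤ L) :
    ∫ t in x..y, ‖expSum μ S a t‖ ^ 2 ≤ energy μ S a L :=
  intervalIntegral.integral_mono_interval hx hxy hy
    (Filter.Eventually.of_forall fun _ => by positivity) (intervalIntegrable_expSum _ _)

lemma norm_sq_add_le (x y : ℂ) : ‖x + y‖ ^ 2 ≤ 2 * ‖x‖ ^ 2 + 2 * ‖y‖ ^ 2 := by
  have := norm_add_le x y
  nlinarith [sq_nonneg (‖x‖ - ‖y‖), norm_nonneg (x + y)]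

lemma norm_sq_sub_le (x y : ℂ) : ‖x - y‖ ^ 2 ≤ 2 * ‖x‖ ^ 2 + 2 * ‖y‖ ^ 2 := by
  simpa [sub_eq_add_neg] using norm_sq_add_le x (-y)

/-- Cauchy-Schwarz for a finite sum with coefficients `a`. -/
lemma norm_sum_mul_sq_le (b : ι → ℂ) :
    ‖∑ p ∈ S, a p * b p‖ ^ 2 ≤ (∑ p ∈ S, ‖a p‖ ^ 2) * ∑ p ∈ S, ‖b p‖ ^ 2 := by
  calc ‖∑ p ∈ S, a p * b p‖ ^ 2 ≤ (∑ p ∈ S, ‖a p‖ * ‖b p‖) ^ 2 := by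
        gcongr
        exact (norm_sum_le _ _).trans_eq (by simp)
    _ ≤ _ := Finset.sum_mul_sq_le_sq_mul_sq _ _ _

/-- Parseval's identity over one period `2π/b`, for distinct integer multiples of the base
frequency `b`. -/
lemma parseval {b : ℝ} (hb : 0 < b) (e : ι → ℤ) (he : Set.InjOn e S) (a : ι → ℂ) :
    energy (fun p => I * (b * e p)) S a (2 * Real.pi / b)
      = 2 * Real.pi / b * ∑ p ∈ S, ‖a p‖ ^ 2 := by
  classical
  have hbC : (b : ℂ) ≠ 0 := by exact_mod_cast hb.ne'
  have key : ((energy (fun p => I * (b * e p)) S a (2 * Real.pi / b) : ℝ) : ℂ)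
      = ((2 * Real.pi / b * ∑ p ∈ S, ‖a p‖ ^ 2 : ℝ) : ℂ) := by
    unfold energy
    rw [← intervalIntegral.integral_ofReal]
    have h1 : ∀ t : ℝ, ((‖expSum (fun p => I * (b * e p)) S a t‖ ^ 2 : ℝ) : ℂ)
        = ∑ p ∈ S, ∑ q ∈ S, a p * (starRingEnd ℂ) (a q) *
            exp ((I * b * ((e p - e q : ℤ) : ℂ)) * t) := by
      intro t
      rw [Complex.ofReal_pow, ← Complex.mul_conj', expSum, map_sum, Finset.sum_mul_sum]
      refine Finset.sum_congr rfl fun p _ => Finset.sum_congr rfl fun q _ => ?_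
      rw [map_mul, ← Complex.exp_conj]
      simp only [map_mul, Complex.conj_I, Complex.conj_ofReal, map_intCast]
      rw [mul_mul_mul_comm, ← Complex.exp_add]
      congr 2
      push_cast
      ring
    simp_rw [h1]
    have h2 : ∀ p ∈ S, ∀ q ∈ S, (∫ t in (0 : ℝ)..(2 * Real.pi / b),
        a p * (starRingEnd ℂ) (a q) * exp ((I * b * ((e p - e q : ℤ) : ℂ)) * t))
        = if p = q then (2 * Real.pi / b * ‖a p‖ ^ 2 : ℂ) else 0 := by
      intro p hp q hq
      split_ifs with h
      · subst h
        simp [Complex.mul_conj']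
      · have hne : (e p - e q : ℤ) ≠ 0 := sub_ne_zero.2 fun h' => h (he hp hq h')
        have hne' : (I * b * ((e p - e q : ℤ) : ℂ)) ≠ 0 :=
          mul_ne_zero (mul_ne_zero I_ne_zero hbC) (by exact_mod_cast hne)
        rw [intervalIntegral.integral_const_mul, integral_exp_mul_complex hne']
        have : I * b * ((e p - e q : ℤ) : ℂ) * ((2 * Real.pi / b : ℝ) : ℂ)
            = ((e p - e q : ℤ) : ℂ) * (2 * Real.pi * I) := by
          push_cast; field_simp
        rw [this, Complex.exp_int_mul_two_pi_mul_I]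
        simp
    rw [intervalIntegral.integral_finsetSum
      (fun p _ => Continuous.intervalIntegrable (by fun_prop) _ _)]
    rw [Finset.sum_congr rfl fun p hp => by
      rw [intervalIntegral.integral_finsetSum
          (fun q _ => Continuous.intervalIntegrable (by fun_prop) _ _),
        Finset.sum_congr rfl fun q hq => h2 p hp q hq, Finset.sum_ite_eq, if_pos hp]]
    push_cast
    rw [Finset.mul_sum]
  exact_mod_cast key

/-- Multiplying all exponentials by `e^{ωt}`, `ω` real, changes the energy by bounded factors. -/
lemma energy_shift_bounds {ν : ι → ℂ} {ω L : ℝ} (hL : 0 ≤ L) (hμ : ∀ p ∈ S, μ p = ω + ν p) :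
    energy ν S a L ≤ Real.exp (2 * |ω| * L) * energy μ S a L ∧
    energy μ S a L ≤ Real.exp (2 * |ω| * L) * energy ν S a L := by
  have h : ∀ t : ℝ, ‖expSum μ S a t‖ ^ 2 = Real.exp (2 * ω * t) * ‖expSum ν S a t‖ ^ 2 := by
    intro t
    have : expSum μ S a t = exp ((ω * t : ℝ) : ℂ) * expSum ν S a t := by
      unfold expSum
      rw [Finset.mul_sum]
      refine Finset.sum_congr rfl fun p hp => ?_
      rw [hμ p hp, add_mul, Complex.exp_add]
      push_cast
      ring
    rw [this, norm_mul, mul_pow, Complex.norm_exp_ofReal, ← Real.exp_nat_mul]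
    congr 2
    push_cast
    ring
  have hω : ∀ t ∈ Set.Icc 0 L, |2 * ω * t| ≤ 2 * |ω| * L := by
    intro t ht
    rw [abs_mul, abs_mul, abs_two, abs_of_nonneg ht.1]
    have := ht.2
    gcongr
  unfold energy
  rw [← intervalIntegral.integral_const_mul, ← intervalIntegral.integral_const_mul]
  constructor
  · refine integral_le_of_le (by fun_prop) (by fun_prop) hL fun t ht => ?_
    rw [h, ← mul_assoc, ← Real.exp_add]
    refine le_mul_of_one_le_left (by positivity) (Real.one_le_exp ?_)
    linarith [neg_abs_le (2 * ω * t), hω t ht]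
  · refine integral_le_of_le (by fun_prop) (by fun_prop) hL fun t ht => ?_
    rw [h]
    refine mul_le_mul_of_nonneg_right (Real.exp_le_exp.2 ?_) (by positivity)
    linarith [le_abs_self (2 * ω * t), hω t ht]

/-- The difference operator `f ↦ f(· + τ) - c f` acts on exponential sums as a multiplier, and is
bounded from `L²(0, L + τ)` to `L²(0, L)`. -/
lemma energy_difference_le {L τ : ℝ} (hL : 0 ≤ L) (hτ : 0 ≤ τ) (c : ℂ) :
    energy μ S (fun p => a p * (exp (μ p * τ) - c)) L
      ≤ (2 + 2 * ‖c‖ ^ 2) * energy μ S a (L + τ) := by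
  have h : ∀ t : ℝ, expSum μ S (fun p => a p * (exp (μ p * τ) - c)) t
      = expSum μ S a (t + τ) - c * expSum μ S a t := by
    intro t
    unfold expSum
    rw [Finset.mul_sum, ← Finset.sum_sub_distrib]
    refine Finset.sum_congr rfl fun p _ => ?_
    push_cast
    rw [mul_add, Complex.exp_add]
    ring
  calc energy μ S (fun p => a p * (exp (μ p * τ) - c)) L
      ≤ ∫ t in (0 : ℝ)..L,
          (2 * ‖expSum μ S a (t + τ)‖ ^ 2 + 2 * ‖c‖ ^ 2 * ‖expSum μ S a t‖ ^ 2) := by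
        refine integral_le_of_le (by fun_prop) (by fun_prop) hL fun t _ => ?_
        rw [h]
        refine (norm_sq_sub_le _ _).trans_eq ?_
        rw [norm_mul]; ring
    _ = 2 * (∫ t in (0 : ℝ)..L, ‖expSum μ S a (t + τ)‖ ^ 2)
          + 2 * ‖c‖ ^ 2 * ∫ t in (0 : ℝ)..L, ‖expSum μ S a t‖ ^ 2 := by
        rw [intervalIntegral.integral_add (Continuous.intervalIntegrable (by fun_prop) _ _)
          (Continuous.intervalIntegrable (by fun_prop) _ _),
          intervalIntegral.integral_const_mul, intervalIntegral.integral_const_mul]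
    _ ≤ 2 * energy μ S a (L + τ) + 2 * ‖c‖ ^ 2 * energy μ S a (L + τ) := by
        rw [intervalIntegral.integral_comp_add_right (fun t => ‖expSum μ S a t‖ ^ 2) τ]
        have h1 := integral_le_energy (μ := μ) (S := S) (a := a)
          (x := 0 + τ) (y := L + τ) (L := L + τ) (by linarith) (by linarith) le_rfl
        have h2 := integral_le_energy (μ := μ) (S := S) (a := a)
          (x := 0) (y := L) (L := L + τ) le_rfl hL (by linarith)
        gcongr
    _ = _ := by ring

end General

/-! ### The model exponents -/

section Model

variable (ω β : Fin 3 → ℝ)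

/-- The model exponents `ω_j + i β_j n`, of which `-conj(λ_n^j)` is a perturbation. -/
noncomputable def model (p : ℤ × Fin 3) : ℂ := ω p.2 + I * (β p.2 * p.1)

/-- The period `2π/|β_j|` of the `j`-th branch of the model, up to the factor `e^{ω_j t}`. -/
noncomputable def period (j : Fin 3) : ℝ := 2 * Real.pi / |β j|

variable {ω β}

lemma period_pos (hβ : ∀ j, β j ≠ 0) (j : Fin 3) : 0 < period β j :=
  div_pos (by positivity) (abs_pos.2 (hβ j))

/-- Two-sided estimate for a single branch on `k` periods. Its frequencies are multiples of
`|β_l|/k`, hence Parseval's identity applies on the whole interval. -/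
lemma single_branch (hβ : ∀ j, β j ≠ 0) (l : Fin 3) {k : ℕ} (hk : 0 < k)
    {S : Finset (ℤ × Fin 3)} (hS : ∀ p ∈ S, p.2 = l) (a : ℤ × Fin 3 → ℂ) :
    energy (model ω β) S a (k * period β l) ≤
      Real.exp (2 * |ω l| * (k * period β l)) * (k * period β l) * ∑ p ∈ S, ‖a p‖ ^ 2 ∧
    (k * period β l) * ∑ p ∈ S, ‖a p‖ ^ 2 ≤
      Real.exp (2 * |ω l| * (k * period β l)) * energy (model ω β) S a (k * period β l) := by
  have hkR : (0 : ℝ) < k := by exact_mod_cast hk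
  have hb : 0 < |β l| / k := div_pos (abs_pos.2 (hβ l)) hkR
  set e : ℤ × Fin 3 → ℤ := fun p => if 0 < β l then k * p.1 else -(k * p.1) with he
  have hinj : Set.InjOn e S := by
    intro p hp q hq h
    have hk' : (k : ℤ) ≠ 0 := by exact_mod_cast hk.ne'
    refine Prod.ext ?_ ((hS p hp).trans (hS q hq).symm)
    simp only [he] at h
    split_ifs at h
    · exact mul_left_cancel₀ hk' h
    · exact mul_left_cancel₀ hk' (neg_injective h)
  have hP := parseval hb e hinj a
  have hL : 2 * Real.pi / (|β l| / k) = k * period β l := by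
    have := (abs_pos.2 (hβ l)).ne'
    unfold period; field_simp
  rw [hL] at hP
  have hpos : 0 ≤ k * period β l := (mul_pos hkR (period_pos hβ l)).le
  have hμ : ∀ p ∈ S, model ω β p = (ω l : ℂ) + I * (((|β l| / k : ℝ) : ℂ) * e p) := by
    intro p hp
    have hkC : (k : ℂ) ≠ 0 := by exact_mod_cast hk.ne'
    simp only [model, he, hS p hp]
    split_ifs with h
    · rw [abs_of_pos h]; push_cast; field_simp
    · rw [abs_of_nonpos (not_lt.1 h)]; push_cast; field_simp
  obtain ⟨h1, h2⟩ := energy_shift_bounds (a := a) hpos hμ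
  rw [hP] at h1 h2
  exact ⟨h2.trans_eq (by ring), h1⟩

/-- The model satisfies the upper inequality on every interval. -/
lemma model_upper (hβ : ∀ j, β j ≠ 0) (L : ℝ) (hL : 0 < L) :
    UpperIneq (model ω β) Set.univ L := by
  have h : ∀ l : Fin 3, ∃ K : ℝ, 0 < K ∧ ∀ S : Finset (ℤ × Fin 3), (∀ p ∈ S, p.2 = l) →
      ∀ a : ℤ × Fin 3 → ℂ, energy (model ω β) S a L ≤ K * ∑ p ∈ S, ‖a p‖ ^ 2 := by
    intro l
    have hper := period_pos hβ l
    obtain ⟨k, hk⟩ := exists_nat_ge (L / period β l)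
    have hk0 : 0 < k := by
      have := (div_pos hL hper).trans_le hk
      exact_mod_cast this
    have hkR : (0 : ℝ) < k := by exact_mod_cast hk0
    refine ⟨Real.exp (2 * |ω l| * (k * period β l)) * (k * period β l), by positivity,
      fun S hS a => ?_⟩
    exact (integral_le_energy le_rfl hL.le ((div_le_iff₀ hper).1 hk)).trans
      (single_branch (ω := ω) hβ l hk0 hS a).1
  choose K hK0 hK using h
  refine ⟨3 * ∑ l, K l, mul_pos three_pos (Finset.sum_pos (fun l _ => hK0 l) ⟨0, by simp⟩),
    fun S _ a => ?_⟩
  have hsplit : ∀ t, expSum (model ω β) S a t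
      = ∑ l, expSum (model ω β) (S.filter (fun p => p.2 = l)) a t := fun t =>
    (Finset.sum_fiberwise S (fun p => p.2) _).symm
  calc energy (model ω β) S a L
      ≤ ∫ t in (0 : ℝ)..L,
          3 * ∑ l, ‖expSum (model ω β) (S.filter (fun p => p.2 = l)) a t‖ ^ 2 := by
        refine integral_le_of_le (by fun_prop) (by fun_prop) hL.le fun t _ => ?_
        rw [hsplit]
        calc _ ≤ (∑ l, ‖expSum (model ω β) (S.filter (fun p => p.2 = l)) a t‖) ^ 2 := by
              gcongr; exact norm_sum_le _ _
          _ ≤ _ := by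
              simpa using sq_sum_le_card_mul_sum_sq (s := (Finset.univ : Finset (Fin 3)))
                (f := fun l => ‖expSum (model ω β) (S.filter (fun p => p.2 = l)) a t‖)
    _ = 3 * ∑ l, energy (model ω β) (S.filter (fun p => p.2 = l)) a L := by
        rw [intervalIntegral.integral_const_mul, intervalIntegral.integral_finsetSum
          (fun p _ => intervalIntegrable_expSum _ _)]
        rfl
    _ ≤ 3 * ∑ l, K l * ∑ p ∈ S, ‖a p‖ ^ 2 := by
        gcongr with l
        refine (hK l _ (by simp) a).trans ?_
        have := (hK0 l).le
        gcongr
        exact Finset.filter_subset _ _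
    _ = _ := by rw [← Finset.sum_mul]; ring

/-- The coefficients of the branch `l` are controlled by the energy of the full sum: the
difference operators `f ↦ f(· + τ_j) - e^{ω_j τ_j} f` with `τ_j` the period of the branch `j`
annihilate the branch `j`, and because `ω_l ≠ ω_j` their multipliers are bounded
away from zero on the branch `l`. -/
lemma model_branch_lower (hω : Function.Injective ω) (hβ : ∀ j, β j ≠ 0) {j k l : Fin 3}
    (hjl : l ≠ j) (hkl : l ≠ k) (hall : ∀ i, i = j ∨ i = k ∨ i = l) {L : ℝ}
    (hL : period β l + period β k + period β j ≤ L) :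
    ∃ K : ℝ, 0 < K ∧ ∀ (S : Finset (ℤ × Fin 3)) (a : ℤ × Fin 3 → ℂ),
      ∑ p ∈ S.filter (fun p => p.2 = l), ‖a p‖ ^ 2 ≤ K * energy (model ω β) S a L := by
  have hpj := period_pos hβ j
  have hpk := period_pos hβ k
  have hpl := period_pos hβ l
  set c : Fin 3 → ℂ := fun i => exp (ω i * period β i : ℝ) with hc
  have hvan : ∀ (p : ℤ × Fin 3) (i : Fin 3), p.2 = i →
      exp (model ω β p * period β i) - c i = 0 := by
    rintro ⟨n, i⟩ _ rfl
    change exp (model ω β (n, i) * period β i) - c i = 0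
    have hne : β i ≠ 0 := hβ i
    have hneC : (β i : ℂ) ≠ 0 := by exact_mod_cast hne
    obtain ⟨m, hm⟩ : ∃ m : ℤ, model ω β (n, i) * period β i
        = (ω i * period β i : ℝ) + m * (2 * Real.pi * I) := by
      rcases lt_or_gt_of_ne hne with h | h
      · refine ⟨-n, ?_⟩
        simp only [model, period, abs_of_neg h]
        push_cast
        field_simp
        ring
      · refine ⟨n, ?_⟩
        simp only [model, period, abs_of_pos h]
        push_cast
        field_simp
    simp only [hc]
    rw [hm, Complex.exp_add, Complex.exp_int_mul_two_pi_mul_I, mul_one, sub_self]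
  have hlow : ∀ i, l ≠ i → ∃ m : ℝ, 0 < m ∧ ∀ p : ℤ × Fin 3, p.2 = l →
      m ≤ ‖exp (model ω β p * period β i) - c i‖ := by
    intro i hi
    have hpi := period_pos hβ i
    refine ⟨|Real.exp (ω l * period β i) - Real.exp (ω i * period β i)|, ?_, ?_⟩
    · refine abs_pos.2 (sub_ne_zero.2 fun h => hi (hω ?_))
      exact mul_right_cancel₀ hpi.ne' (Real.exp_injective h)
    · rintro p hp
      have h1 : ‖exp (model ω β p * period β i)‖ = Real.exp (ω l * period β i) := by
        rw [Complex.norm_exp]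
        simp [model, hp]
      have h2 : ‖c i‖ = Real.exp (ω i * period β i) := by
        simp only [hc]; rw [Complex.norm_exp_ofReal]
      rw [← h1, ← h2]
      exact abs_norm_sub_norm_le _ _
  obtain ⟨mj, hmj0, hmj⟩ := hlow j hjl
  obtain ⟨mk, hmk0, hmk⟩ := hlow k hkl
  have hL' : (0 : ℝ) ≤ period β l := hpl.le
  set E := Real.exp (2 * |ω l| * period β l)
  set A := (2 + 2 * ‖c k‖ ^ 2)
  set B := (2 + 2 * ‖c j‖ ^ 2)
  refine ⟨((mj * mk) ^ 2)⁻¹ * ((period β l)⁻¹ * (E * (A * B))), by positivity, fun S a => ?_⟩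
  set a' : ℤ × Fin 3 → ℂ := fun p => a p * (exp (model ω β p * period β j) - c j)
  set b : ℤ × Fin 3 → ℂ := fun p => a' p * (exp (model ω β p * period β k) - c k)
  have h1 : energy (model ω β) S b (period β l) ≤ A * (B * energy (model ω β) S a L) := by
    refine (energy_difference_le hL' hpk.le (c k)).trans ?_
    gcongr
    refine (energy_difference_le (by positivity) hpj.le (c j)).trans ?_
    gcongr
    exact integral_le_energy le_rfl (by positivity) hL
  have h2 : energy (model ω β) S b (period β l)
      = energy (model ω β) (S.filter (fun p => p.2 = l)) b (period β l) := by
    unfold energy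
    congr 1
    ext t
    congr 2
    unfold expSum
    refine (Finset.sum_filter_of_ne fun p _ hne => ?_).symm
    by_contra hpl
    apply hne
    rcases hall p.2 with h | h | h
    · simp [b, a', hvan p j h]
    · simp [b, hvan p k h]
    · exact absurd h hpl
  have h3 := (single_branch (ω := ω) hβ l one_pos
    (S := S.filter (fun p => p.2 = l)) (by simp) b).2
  rw [Nat.cast_one, one_mul, ← h2] at h3
  have h4 : (mj * mk) ^ 2 * ∑ p ∈ S.filter (fun p => p.2 = l), ‖a p‖ ^ 2
      ≤ ∑ p ∈ S.filter (fun p => p.2 = l), ‖b p‖ ^ 2 := by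
    rw [Finset.mul_sum]
    refine Finset.sum_le_sum fun p hp => ?_
    have hp' := (Finset.mem_filter.1 hp).2
    simp only [b, a', norm_mul]
    rw [← mul_pow]
    have := hmj p hp'
    have := hmk p hp'
    refine pow_le_pow_left₀ (by positivity) ?_ 2
    calc mj * mk * ‖a p‖ = ‖a p‖ * mj * mk := by ring
      _ ≤ _ := by gcongr
  have h5 : ∑ p ∈ S.filter (fun p => p.2 = l), ‖b p‖ ^ 2
      ≤ (period β l)⁻¹ * (E * (A * (B * energy (model ω β) S a L))) := by
    rw [le_inv_mul_iff₀ hpl]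
    exact h3.trans (by gcongr)
  calc _ ≤ ((mj * mk) ^ 2)⁻¹ * ((period β l)⁻¹ * (E * (A * (B * energy (model ω β) S a L)))) := by
        rw [le_inv_mul_iff₀ (by positivity)]
        exact h4.trans h5
    _ = _ := by ring

/-- The model satisfies the lower inequality on intervals at least as long as the sum of the
three periods. -/
lemma model_lower (hω : Function.Injective ω) (hβ : ∀ j, β j ≠ 0) {L : ℝ}
    (hL : period β 0 + period β 1 + period β 2 ≤ L) :
    LowerIneq (model ω β) Set.univ L := by
  have h : ∀ l : Fin 3, ∃ K : ℝ, 0 < K ∧ ∀ (S : Finset (ℤ × Fin 3)) (a : ℤ × Fin 3 → ℂ),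
      ∑ p ∈ S.filter (fun p => p.2 = l), ‖a p‖ ^ 2 ≤ K * energy (model ω β) S a L := by
    intro l
    fin_cases l
    · exact model_branch_lower hω hβ (j := 1) (k := 2) (l := 0) (by decide) (by decide)
        (by decide) (by linarith)
    · exact model_branch_lower hω hβ (j := 0) (k := 2) (l := 1) (by decide) (by decide)
        (by decide) (by linarith)
    · exact model_branch_lower hω hβ (j := 0) (k := 1) (l := 2) (by decide) (by decide)
        (by decide) (by linarith)
  choose K hK0 hK using h
  refine ⟨∑ l, K l, Finset.sum_pos (fun l _ => hK0 l) ⟨0, by simp⟩, fun S _ a => ?_⟩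
  rw [← Finset.sum_fiberwise S (fun p => p.2), Finset.sum_mul]
  exact Finset.sum_le_sum fun l _ => hK l S a

end Model

/-! ### Square-summable perturbations -/

section Perturbation

variable {ι : Type*} {μ ν : ι → ℂ}

/-- `L²` distance of two exponential sums with the same coefficients, when each pair of
exponentials differs by at most `√(w p)`. -/
lemma integral_norm_sub_sq_le {S : Finset ι} {L : ℝ} (hL : 0 ≤ L) {w : ι → ℝ}
    (h : ∀ p ∈ S, ∀ t ∈ Set.Icc 0 L, ‖exp (μ p * t) - exp (ν p * t)‖ ^ 2 ≤ w p) (a : ι → ℂ) :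
    ∫ t in (0 : ℝ)..L, ‖expSum μ S a t - expSum ν S a t‖ ^ 2
      ≤ L * (∑ p ∈ S, w p) * ∑ p ∈ S, ‖a p‖ ^ 2 := by
  calc _ ≤ ∫ _ in (0 : ℝ)..L, (∑ p ∈ S, ‖a p‖ ^ 2) * ∑ p ∈ S, w p := by
        refine integral_le_of_le (by fun_prop) (by fun_prop) hL fun t ht => ?_
        have : expSum μ S a t - expSum ν S a t
            = ∑ p ∈ S, a p * (exp (μ p * t) - exp (ν p * t)) := by
          simp only [expSum, ← Finset.sum_sub_distrib, mul_sub]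
        rw [this]
        refine (norm_sum_mul_sq_le _).trans ?_
        gcongr with p hp
        exact h p hp t ht
    _ = _ := by
        rw [intervalIntegral.integral_const]
        simp only [sub_zero, smul_eq_mul]
        ring

lemma energy_le_add {S : Finset ι} {L : ℝ} (hL : 0 ≤ L) (a : ι → ℂ) :
    energy μ S a L ≤ 2 * energy ν S a L
      + 2 * ∫ t in (0 : ℝ)..L, ‖expSum μ S a t - expSum ν S a t‖ ^ 2 := by
  unfold energy
  rw [← intervalIntegral.integral_const_mul, ← intervalIntegral.integral_const_mul,
    ← intervalIntegral.integral_add (Continuous.intervalIntegrable (by fun_prop) _ _)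
      (Continuous.intervalIntegrable (by fun_prop) _ _)]
  refine integral_le_of_le (by fun_prop) (by fun_prop) hL fun t _ => ?_
  simpa using norm_sq_add_le (expSum ν S a t) (expSum μ S a t - expSum ν S a t)

/-- Stability of the upper inequality under square-summable perturbations. -/
lemma UpperIneq.perturb {P : Set ι} {L : ℝ} (hL : 0 ≤ L) {w : ι → ℝ} (hw : Summable w)
    (hw0 : ∀ p, 0 ≤ w p)
    (h : ∀ p ∈ P, ∀ t ∈ Set.Icc 0 L, ‖exp (μ p * t) - exp (ν p * t)‖ ^ 2 ≤ w p)
    (hν : UpperIneq ν P L) : UpperIneq μ P L := by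
  obtain ⟨K, hK0, hK⟩ := hν
  have hW : 0 ≤ ∑' p, w p := tsum_nonneg hw0
  refine ⟨2 * K + 2 * (L * ∑' p, w p), by positivity, fun S hS a => ?_⟩
  refine (energy_le_add (ν := ν) hL a).trans ?_
  have h1 := integral_norm_sub_sq_le hL (fun p hp => h p (hS p hp)) a
  have h2 : L * (∑ p ∈ S, w p) * ∑ p ∈ S, ‖a p‖ ^ 2
      ≤ L * (∑' p, w p) * ∑ p ∈ S, ‖a p‖ ^ 2 := by
    gcongr
    exact hw.sum_le_tsum S fun p _ => hw0 p
  linarith [hK S hS a]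

/-- Stability of the lower inequality under square-summable perturbations, up to the removal of
finitely many exponents: those outside of which the perturbation is small. -/
lemma LowerIneq.perturb {P : Set ι} {L : ℝ} (hL : 0 ≤ L) {w : ι → ℝ} (hw : Summable w)
    (h : ∀ p ∈ P, ∀ t ∈ Set.Icc 0 L, ‖exp (μ p * t) - exp (ν p * t)‖ ^ 2 ≤ w p)
    (hν : LowerIneq ν P L) : ∃ E : Finset ι, LowerIneq μ {p | p ∈ P ∧ p ∉ E} L := by
  obtain ⟨K, hK0, hK⟩ := hν
  obtain ⟨E, hE⟩ := summable_iff_vanishing_norm.1 hw (1 / (4 * K * (L + 1))) (by positivity)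
  refine ⟨E, 4 * K, by positivity, fun S hS a => ?_⟩
  have hdisj : Disjoint S E := Finset.disjoint_left.2 fun p hp => (hS p hp).2
  have hsum : ∑ p ∈ S, w p ≤ 1 / (4 * K * (L + 1)) :=
    (le_abs_self _).trans (hE S hdisj).le
  have h1 := integral_norm_sub_sq_le (ν := μ) (μ := ν) hL (w := w)
    (fun p hp t ht => by rw [norm_sub_rev]; exact h p (hS p hp).1 t ht) a
  have h2 := energy_le_add (μ := ν) (ν := μ) (S := S) hL a
  have h3 := hK S (fun p hp => (hS p hp).1) a
  have h4 : K * (2 * (L * (∑ p ∈ S, w p) * ∑ p ∈ S, ‖a p‖ ^ 2))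
      ≤ 1 / 2 * ∑ p ∈ S, ‖a p‖ ^ 2 := by
    rw [← mul_assoc, ← mul_assoc]
    refine mul_le_mul_of_nonneg_right ?_ (by positivity)
    calc K * 2 * (L * ∑ p ∈ S, w p) ≤ K * 2 * ((L + 1) * (1 / (4 * K * (L + 1)))) := by
          refine mul_le_mul_of_nonneg_left ?_ (by positivity)
          exact (mul_le_mul_of_nonneg_left hsum hL).trans
            (mul_le_mul_of_nonneg_right (by linarith) (by positivity))
      _ = 1 / 2 := by field_simp; norm_num
  have h5 : ∑ p ∈ S, ‖a p‖ ^ 2 ≤ K * (2 * energy μ S a L)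
      + K * (2 * (L * (∑ p ∈ S, w p) * ∑ p ∈ S, ‖a p‖ ^ 2)) := by
    rw [← mul_add]
    exact h3.trans (mul_le_mul_of_nonneg_left (by linarith) hK0.le)
  linarith

/-- Pointwise size of the perturbation of a single exponential. -/
lemma norm_exp_sub_exp_le {x y : ℂ} {R C L t : ℝ} (hy : |y.re| ≤ R) (hxy : ‖x - y‖ ≤ C)
    (ht : t ∈ Set.Icc 0 L) :
    ‖exp (x * t) - exp (y * t)‖ ≤ Real.exp (R * L) * Real.exp (C * L) * L * ‖x - y‖ := by
  have hL : 0 ≤ L := ht.1.trans ht.2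
  have hR : 0 ≤ R := (abs_nonneg _).trans hy
  have h1 : exp (x * t) - exp (y * t) = exp (y * t) * (exp ((x - y) * t) - 1) := by
    rw [mul_sub, ← Complex.exp_add]
    ring_nf
  have h2 : ‖exp (y * t)‖ ≤ Real.exp (R * L) := by
    rw [Complex.norm_exp]
    refine Real.exp_le_exp.2 ?_
    simp only [mul_re, ofReal_re, ofReal_im, mul_zero, sub_zero]
    calc y.re * t ≤ R * t := mul_le_mul_of_nonneg_right ((le_abs_self _).trans hy) ht.1
      _ ≤ R * L := mul_le_mul_of_nonneg_left ht.2 hR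
  have h3 : ‖(x - y) * t‖ ≤ ‖x - y‖ * L := by
    rw [norm_mul, Complex.norm_real, Real.norm_of_nonneg ht.1]
    exact mul_le_mul_of_nonneg_left ht.2 (norm_nonneg _)
  have h4 := Complex.norm_exp_sub_sum_le_norm_mul_exp ((x - y) * t) 1
  simp only [Finset.range_one, Finset.sum_singleton, pow_zero, Nat.factorial_zero, Nat.cast_one,
    div_one, pow_one] at h4
  rw [h1, norm_mul]
  calc _ ≤ Real.exp (R * L) * (‖x - y‖ * L * Real.exp (C * L)) := by
        refine mul_le_mul h2 (h4.trans (mul_le_mul h3 (Real.exp_le_exp.2 (h3.trans ?_))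
          (Real.exp_pos _).le (by positivity))) (norm_nonneg _) (Real.exp_pos _).le
        gcongr
    _ = _ := by ring

end Perturbation

/-! ### Adding one exponent -/

section Haraux

/-- In the strip `|Re u| ≤ 1/2` the only zero of `e^u - 1 - u` is `u = 0`. -/
lemma exp_sub_one_sub_ne_zero {u : ℂ} (hre : |u.re| ≤ 1 / 2) (hu : u ≠ 0) :
    exp u - 1 - u ≠ 0 := by
  intro h0
  have hexp : exp u = 1 + u := by linear_combination h0
  -- Comparing moduli, `e^{2x} = (1 + x)² + y²` for `u = x + iy`, hence `y² ≤ 3x²`.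
  have hsq : Real.exp (2 * u.re) = (1 + u.re) ^ 2 + u.im ^ 2 := by
    have h1 : ‖exp u‖ ^ 2 = Real.exp (2 * u.re) := by
      rw [Complex.norm_exp, ← Real.exp_nat_mul]; norm_num
    rw [← h1, hexp, Complex.sq_norm, Complex.normSq_apply]
    simp only [add_re, add_im, one_re, one_im]
    ring
  have hb := Real.abs_exp_sub_one_sub_id_le (x := 2 * u.re) (by
    rw [abs_mul, abs_two]; linarith)
  have hb' := (abs_le.1 hb).2
  have hx : u.re ^ 2 ≤ 1 / 4 := by
    rw [← sq_abs]; nlinarith [abs_nonneg u.re]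
  have hnorm : ‖u‖ ^ 2 ≤ 1 := by
    rw [Complex.sq_norm, Complex.normSq_apply]
    nlinarith
  have hn1 : ‖u‖ ≤ 1 := by nlinarith [norm_nonneg u]
  have hpos : 0 < ‖u‖ := norm_pos_iff.2 hu
  have ht := Complex.exp_bound hn1 (n := 3) (by norm_num)
  have : exp u - ∑ m ∈ Finset.range 3, u ^ m / (m.factorial : ℂ) = -(u ^ 2 / 2) := by
    rw [hexp]
    simp [Finset.sum_range_succ, Nat.factorial]
  rw [this] at ht
  simp only [norm_neg, norm_div, norm_pow, Nat.factorial] at ht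
  norm_num at ht
  nlinarith [pow_pos hpos 2, pow_pos hpos 3]

/-- The multiplier `δ - ∫_0^δ e^{zs} ds` of the averaging operator below. It vanishes at `z = 0`. -/
noncomputable def avgMult (δ : ℝ) (z : ℂ) : ℂ := δ - ∫ s in (0 : ℝ)..δ, exp (z * s)

lemma avgMult_zero (δ : ℝ) : avgMult δ 0 = 0 := by
  simp [avgMult]

/-- For small `δ` the multiplier is bounded away from zero off a neighbourhood of `0` in a vertical
strip. -/
lemma exists_avgMult_lower (R : ℝ) (hR : 0 ≤ R) {γ δ₀ : ℝ} (hγ : 0 < γ) (hδ₀ : 0 < δ₀) :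
    ∃ δ : ℝ, 0 < δ ∧ δ ≤ δ₀ ∧ ∃ m : ℝ, 0 < m ∧
      ∀ z : ℂ, |z.re| ≤ R → γ ≤ ‖z‖ → m ≤ ‖avgMult δ z‖ := by
  obtain ⟨δ, hδ, hδ1, hδ2⟩ : ∃ δ : ℝ, 0 < δ ∧ δ ≤ δ₀ ∧ R * δ ≤ 1 / 2 := by
    refine ⟨min δ₀ (1 / (2 * (R + 1))), lt_min hδ₀ (by positivity), min_le_left _ _, ?_⟩
    calc R * min δ₀ (1 / (2 * (R + 1))) ≤ (R + 1) * (1 / (2 * (R + 1))) :=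
          mul_le_mul (by linarith) (min_le_right _ _) (by positivity) (by positivity)
      _ = 1 / 2 := by field_simp
  have hcomp : IsCompact (Metric.closedBall (0 : ℂ) 8 ∩ {u : ℂ | |u.re| ≤ 1 / 2 ∧ γ * δ ≤ ‖u‖}) :=
    (isCompact_closedBall _ _).inter_right
      ((isClosed_le (by fun_prop : Continuous fun u : ℂ => |u.re|) continuous_const).inter
        (isClosed_le continuous_const (by fun_prop : Continuous fun u : ℂ => ‖u‖)))
  obtain ⟨m, hm, hmle⟩ := hcomp.exists_forall_le' (f := fun u : ℂ => ‖exp u - 1 - u‖) (a := 0)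
    (by fun_prop) (by
      rintro u ⟨_, hu1, hu2⟩
      refine norm_pos_iff.2 (exp_sub_one_sub_ne_zero hu1 (norm_pos_iff.1 ?_))
      exact (mul_pos hγ hδ).trans_le hu2)
  refine ⟨δ, hδ, hδ1, min (1 / 2) (m / 8) * δ, by positivity, fun z hz1 hz2 => ?_⟩
  have hz0 : z ≠ 0 := norm_pos_iff.1 (hγ.trans_le hz2)
  set u : ℂ := z * δ with hu
  have hunorm : ‖u‖ = ‖z‖ * δ := by
    rw [hu, norm_mul, Complex.norm_real, Real.norm_of_nonneg hδ.le]
  have hure : |u.re| ≤ 1 / 2 := by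
    simp only [hu, mul_re, ofReal_re, ofReal_im, mul_zero, sub_zero]
    rw [abs_mul, abs_of_pos hδ]
    exact (mul_le_mul_of_nonneg_right hz1 hδ.le).trans hδ2
  have key : min (1 / 2) (m / 8) * ‖u‖ ≤ ‖exp u - 1 - u‖ := by
    rcases le_total 8 ‖u‖ with h8 | h8
    · have h1 : ‖exp u‖ ≤ 3 := by
        rw [Complex.norm_exp]
        calc Real.exp u.re ≤ Real.exp 1 :=
              Real.exp_le_exp.2 (by linarith [le_abs_self u.re])
          _ ≤ 3 := by linarith [Real.exp_one_lt_d9]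
      have h2 : ‖u‖ ≤ ‖exp u - 1 - u‖ + (‖exp u‖ + 1) := by
        calc ‖u‖ = ‖(exp u - 1) - (exp u - 1 - u)‖ := by ring_nf
          _ ≤ ‖exp u - 1‖ + ‖exp u - 1 - u‖ := norm_sub_le _ _
          _ ≤ (‖exp u‖ + 1) + ‖exp u - 1 - u‖ := by
              gcongr; simpa using norm_sub_le (exp u) 1
          _ = _ := by ring
      calc min (1 / 2) (m / 8) * ‖u‖ ≤ 1 / 2 * ‖u‖ := by gcongr; exact min_le_left _ _
        _ ≤ _ := by linarith
    · calc min (1 / 2) (m / 8) * ‖u‖ ≤ m / 8 * 8 := by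
            gcongr; exact min_le_right _ _
        _ = m := by ring
        _ ≤ _ := hmle u ⟨by simpa using h8, hure, by rw [hunorm]; gcongr⟩
  have hM : avgMult δ z = -(exp u - 1 - u) / z := by
    rw [avgMult, integral_exp_mul_complex hz0, hu]
    field_simp
    simp
  rw [hM, norm_div, norm_neg, le_div_iff₀ (norm_pos_iff.2 hz0)]
  calc _ = min (1 / 2) (m / 8) * ‖u‖ := by rw [hunorm]; ring
    _ ≤ _ := key

variable {ι : Type*} {μ : ι → ℂ}

/-- Cauchy-Schwarz against the constant function on `[0, δ]`. -/
lemma sq_integral_le {f : ℝ → ℝ} (hf : Continuous f) {δ : ℝ} (hδ : 0 < δ) :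
    (∫ s in (0 : ℝ)..δ, f s) ^ 2 ≤ δ * ∫ s in (0 : ℝ)..δ, f s ^ 2 := by
  set A := ∫ s in (0 : ℝ)..δ, f s with hA
  have h : 0 ≤ ∫ s in (0 : ℝ)..δ, (δ * f s - A) ^ 2 :=
    intervalIntegral.integral_nonneg hδ.le fun _ _ => by positivity
  have h' : ∫ s in (0 : ℝ)..δ, (δ * f s - A) ^ 2
      = δ ^ 2 * (∫ s in (0 : ℝ)..δ, f s ^ 2) - δ * A ^ 2 := by
    have : ∀ s, (δ * f s - A) ^ 2 = δ ^ 2 * f s ^ 2 - 2 * δ * A * f s + A ^ 2 := fun s => by ring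
    simp_rw [this]
    rw [intervalIntegral.integral_add (Continuous.intervalIntegrable (by fun_prop) _ _)
        (Continuous.intervalIntegrable (by fun_prop) _ _),
      intervalIntegral.integral_sub (Continuous.intervalIntegrable (by fun_prop) _ _)
        (Continuous.intervalIntegrable (by fun_prop) _ _),
      intervalIntegral.integral_const_mul, intervalIntegral.integral_const_mul,
      intervalIntegral.integral_const, ← hA]
    simp only [sub_zero, smul_eq_mul]
    ring
  rw [h'] at h
  nlinarith

/-- The operator `f ↦ δ f - ∫_0^δ e^{-ζs} f(· + s) ds`, which annihilates `e^{ζt}`, acts on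
exponential sums as a multiplier and is bounded from `L²(0, L + δ)` to `L²(0, L)`. -/
lemma energy_avg_le (ζ : ℂ) {L δ : ℝ} (hL : 0 ≤ L) (hδ : 0 < δ) :
    ∃ K : ℝ, 0 < K ∧ ∀ (S : Finset ι) (a : ι → ℂ),
      energy μ S (fun p => a p * avgMult δ (μ p - ζ)) L ≤ K * energy μ S a (L + δ) := by
  set B := Real.exp (‖ζ‖ * δ) with hB
  refine ⟨2 * δ ^ 2 + L * (2 * B ^ 2 * δ), by positivity, fun S a => ?_⟩
  have hrep : ∀ t : ℝ, expSum μ S (fun p => a p * avgMult δ (μ p - ζ)) t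
      = δ * expSum μ S a t - ∫ s in (0 : ℝ)..δ, exp (-ζ * s) * expSum μ S a (t + s) := by
    intro t
    have h1 : ∀ s : ℝ, exp (-ζ * s) * expSum μ S a (t + s)
        = ∑ p ∈ S, a p * exp (μ p * t) * exp ((μ p - ζ) * s) := by
      intro s
      unfold expSum
      rw [Finset.mul_sum]
      refine Finset.sum_congr rfl fun p _ => ?_
      rw [mul_left_comm, ← Complex.exp_add, mul_assoc, ← Complex.exp_add]
      congr 2
      push_cast
      ring
    simp_rw [h1]
    rw [intervalIntegral.integral_finsetSum
      (fun p _ => Continuous.intervalIntegrable (by fun_prop) _ _)]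
    unfold expSum
    rw [Finset.mul_sum, ← Finset.sum_sub_distrib]
    refine Finset.sum_congr rfl fun p _ => ?_
    simp only [intervalIntegral.integral_const_mul, avgMult]
    ring
  have hav : ∀ t ∈ Set.Icc 0 L,
      ‖∫ s in (0 : ℝ)..δ, exp (-ζ * s) * expSum μ S a (t + s)‖ ^ 2
        ≤ B ^ 2 * δ * energy μ S a (L + δ) := by
    intro t ht
    have h1 : ‖∫ s in (0 : ℝ)..δ, exp (-ζ * s) * expSum μ S a (t + s)‖
        ≤ B * ∫ s in (0 : ℝ)..δ, ‖expSum μ S a (t + s)‖ := by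
      refine (intervalIntegral.norm_integral_le_integral_norm hδ.le).trans ?_
      rw [← intervalIntegral.integral_const_mul]
      refine integral_le_of_le (by fun_prop) (by fun_prop) hδ.le fun s hs => ?_
      rw [norm_mul]
      gcongr
      refine (Complex.norm_exp_le_exp_norm _).trans (Real.exp_le_exp.2 ?_)
      rw [norm_mul, norm_neg, Complex.norm_real, Real.norm_of_nonneg hs.1]
      exact mul_le_mul_of_nonneg_left hs.2 (norm_nonneg _)
    have h2 := sq_integral_le (f := fun s => ‖expSum μ S a (t + s)‖) (by fun_prop) hδ
    have h3 : ∫ s in (0 : ℝ)..δ, ‖expSum μ S a (t + s)‖ ^ 2 ≤ energy μ S a (L + δ) := by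
      rw [intervalIntegral.integral_comp_add_left (fun s => ‖expSum μ S a s‖ ^ 2) t]
      exact integral_le_energy (by linarith [ht.1]) (by linarith) (by linarith [ht.2])
    calc _ ≤ (B * ∫ s in (0 : ℝ)..δ, ‖expSum μ S a (t + s)‖) ^ 2 := by gcongr
      _ = B ^ 2 * (∫ s in (0 : ℝ)..δ, ‖expSum μ S a (t + s)‖) ^ 2 := by ring
      _ ≤ B ^ 2 * (δ * energy μ S a (L + δ)) := by
          gcongr
          exact h2.trans (by gcongr)
      _ = _ := by ring
  calc energy μ S (fun p => a p * avgMult δ (μ p - ζ)) L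
      ≤ ∫ t in (0 : ℝ)..L,
          (2 * δ ^ 2 * ‖expSum μ S a t‖ ^ 2 + 2 * B ^ 2 * δ * energy μ S a (L + δ)) := by
        refine integral_le_of_le (by fun_prop) (by fun_prop) hL fun t ht => ?_
        rw [hrep]
        refine (norm_sq_sub_le _ _).trans ?_
        rw [norm_mul, Complex.norm_real, Real.norm_of_nonneg hδ.le]
        linarith [hav t ht]
    _ = 2 * δ ^ 2 * energy μ S a L + L * (2 * B ^ 2 * δ * energy μ S a (L + δ)) := by
        rw [intervalIntegral.integral_add (Continuous.intervalIntegrable (by fun_prop) _ _)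
          (Continuous.intervalIntegrable (by fun_prop) _ _),
          intervalIntegral.integral_const_mul, intervalIntegral.integral_const]
        simp only [sub_zero, smul_eq_mul]
        rfl
    _ ≤ 2 * δ ^ 2 * energy μ S a (L + δ) + L * (2 * B ^ 2 * δ * energy μ S a (L + δ)) := by
        gcongr
        exact integral_le_energy le_rfl hL (by linarith)
    _ = _ := by ring

/-- Haraux's lemma: an exponent at positive distance from all the others can be added to a family
satisfying the lower inequality, at the expense of an arbitrarily small lengthening of the
interval. -/
lemma LowerIneq.insert {P : Set ι} {p₀ : ι} {R γ L L' : ℝ} (hR : ∀ p, p ∈ P ∨ p = p₀ →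
    |(μ p).re| ≤ R) (hγ : 0 < γ) (hgap : ∀ p ∈ P, γ ≤ ‖μ p - μ p₀‖) (hL : 0 ≤ L) (hLL' : L < L')
    (hup : UpperIneq μ P L') (hlow : LowerIneq μ P L) :
    LowerIneq μ (Insert.insert p₀ P) L' := by
  classical
  have hR0 : 0 ≤ R := (abs_nonneg _).trans (hR p₀ (Or.inr rfl))
  have hL'0 : 0 < L' := hL.trans_lt hLL'
  obtain ⟨δ, hδ, hδ1, m, hm, hmle⟩ :=
    exists_avgMult_lower (2 * R) (by positivity) hγ (sub_pos.2 hLL')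
  obtain ⟨K₁, hK₁0, hK₁⟩ := hlow
  obtain ⟨K₂, hK₂0, hK₂⟩ := energy_avg_le (ι := ι) (μ := μ) (μ p₀) hL hδ
  obtain ⟨K₃, hK₃0, hK₃⟩ := hup
  set K := (m ^ 2)⁻¹ * (K₁ * K₂)
  have hK0 : 0 < K := by positivity
  set D := L' * Real.exp (-(2 * R * L'))
  have hD0 : 0 < D := by positivity
  refine ⟨K + D⁻¹ * (2 + 2 * (K₃ * K)), by positivity, fun S hS a => ?_⟩
  have hen := energy_nonneg (μ := μ) (S := S) (a := a) hL'0.le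
  have hS' : ∀ p ∈ S.erase p₀, p ∈ P := fun p hp =>
    (hS p (Finset.mem_of_mem_erase hp)).resolve_left (Finset.ne_of_mem_erase hp)
  set b : ι → ℂ := fun p => a p * avgMult δ (μ p - μ p₀)
  have hrest : ∑ p ∈ S.erase p₀, ‖a p‖ ^ 2 ≤ K * energy μ S a L' := by
    have h1 : m ^ 2 * ∑ p ∈ S.erase p₀, ‖a p‖ ^ 2 ≤ ∑ p ∈ S.erase p₀, ‖b p‖ ^ 2 := by
      rw [Finset.mul_sum]
      refine Finset.sum_le_sum fun p hp => ?_
      rw [← mul_pow, mul_comm]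
      simp only [b, norm_mul]
      have hre : |(μ p - μ p₀).re| ≤ 2 * R := by
        rw [sub_re]
        linarith [abs_sub (μ p).re (μ p₀).re, hR p (Or.inl (hS' p hp)), hR p₀ (Or.inr rfl)]
      have := hmle _ hre (hgap p (hS' p hp))
      gcongr
    have h2 : energy μ (S.erase p₀) b L = energy μ S b L := by
      unfold energy
      congr 1
      ext t
      congr 2
      refine Finset.sum_erase _ ?_
      simp [b, avgMult_zero]
    have h3 : energy μ S b L ≤ K₂ * energy μ S a L' :=
      (hK₂ S a).trans (by gcongr; exact integral_le_energy le_rfl (by positivity) (by linarith))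
    calc _ ≤ (m ^ 2)⁻¹ * (K₁ * (K₂ * energy μ S a L')) := by
          rw [le_inv_mul_iff₀ (by positivity)]
          refine h1.trans ((hK₁ _ hS' b).trans ?_)
          rw [h2]
          gcongr
      _ = _ := by ring
  -- The remaining coefficient is recovered from `a_{p₀} e^{μ_{p₀} t} = f - ∑_{p ≠ p₀}`, the last sum
  -- being controlled by the upper inequality.
  by_cases hp₀ : p₀ ∈ S
  · rw [← Finset.add_sum_erase S _ hp₀]
    have hone : D * ‖a p₀‖ ^ 2 ≤ ∫ t in (0 : ℝ)..L', ‖a p₀ * exp (μ p₀ * t)‖ ^ 2 := by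
      calc D * ‖a p₀‖ ^ 2 = ∫ _ in (0 : ℝ)..L', ‖a p₀‖ ^ 2 * Real.exp (-(2 * R * L')) := by
            rw [intervalIntegral.integral_const]
            simp only [sub_zero, smul_eq_mul, D]
            ring
        _ ≤ _ := by
            refine integral_le_of_le (by fun_prop) (by fun_prop) hL'0.le fun t ht => ?_
            rw [norm_mul, mul_pow, Complex.norm_exp, ← Real.exp_nat_mul]
            gcongr
            simp only [mul_re, ofReal_re, ofReal_im, mul_zero, sub_zero]
            have h1 : -R ≤ (μ p₀).re := (abs_le.1 (hR p₀ (Or.inr rfl))).1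
            have h2 : R * t ≤ R * L' := mul_le_mul_of_nonneg_left ht.2 hR0
            have h3 : -R * t ≤ (μ p₀).re * t := mul_le_mul_of_nonneg_right h1 ht.1
            push_cast
            linarith
    have htwo : ∫ t in (0 : ℝ)..L', ‖a p₀ * exp (μ p₀ * t)‖ ^ 2
        ≤ 2 * energy μ S a L' + 2 * energy μ (S.erase p₀) a L' := by
      unfold energy
      rw [← intervalIntegral.integral_const_mul, ← intervalIntegral.integral_const_mul,
        ← intervalIntegral.integral_add (Continuous.intervalIntegrable (by fun_prop) _ _)
          (Continuous.intervalIntegrable (by fun_prop) _ _)]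
      refine integral_le_of_le (by fun_prop) (by fun_prop) hL'0.le fun t _ => ?_
      have : a p₀ * exp (μ p₀ * t) = expSum μ S a t - expSum μ (S.erase p₀) a t := by
        unfold expSum
        rw [← Finset.add_sum_erase S _ hp₀]
        ring
      rw [this]
      exact norm_sq_sub_le _ _
    have hthree : energy μ (S.erase p₀) a L' ≤ K₃ * (K * energy μ S a L') :=
      (hK₃ _ hS' a).trans (by gcongr)
    have hfour : ‖a p₀‖ ^ 2 ≤ D⁻¹ * ((2 + 2 * (K₃ * K)) * energy μ S a L') := by
      rw [le_inv_mul_iff₀ hD0]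
      linarith
    linarith
  · rw [Finset.erase_eq_of_notMem hp₀] at hrest
    refine hrest.trans ?_
    gcongr
    exact le_add_of_nonneg_right (by positivity)

end Haraux

/-! ### Exponents asymptotic to the model -/

section Exponents

variable {ω β : Fin 3 → ℝ} {μ : ℤ × Fin 3 → ℂ} {C : ℝ}

/-- Each exponent is at positive distance from all the others: only finitely many of them lie
within distance `1` of it, and these are distinct from it. -/
lemma exists_gap (hβ : ∀ j, β j ≠ 0) (hC : 0 ≤ C)
    (hμ : ∀ p : ℤ × Fin 3, p.1 ≠ 0 → ‖μ p - model ω β p‖ ≤ C / |(p.1 : ℝ)|)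
    (hinj : ∀ p q : ℤ × Fin 3, p.1 ≠ 0 → q.1 ≠ 0 → p ≠ q → μ p ≠ μ q)
    {p₀ : ℤ × Fin 3} (hp₀ : p₀.1 ≠ 0) :
    ∃ γ : ℝ, 0 < γ ∧ ∀ p : ℤ × Fin 3, p.1 ≠ 0 → p ≠ p₀ → γ ≤ ‖μ p - μ p₀‖ := by
  have hfin : {p : ℤ × Fin 3 | p.1 ≠ 0 ∧ p ≠ p₀ ∧ ‖μ p - μ p₀‖ < 1}.Finite := by
    obtain ⟨B, hB⟩ : ∃ B : ℕ, ∀ j, (1 + C + ‖μ p₀‖) / |β j| ≤ B := by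
      obtain ⟨B, hB⟩ := exists_nat_ge (∑ j, (1 + C + ‖μ p₀‖) / |β j|)
      exact ⟨B, fun j => (Finset.single_le_sum (f := fun j => (1 + C + ‖μ p₀‖) / |β j|)
        (fun i _ => by positivity) (Finset.mem_univ j)).trans hB⟩
    refine (Finset.finite_toSet (Finset.Icc (-(B : ℤ)) B ×ˢ Finset.univ)).subset ?_
    rintro p ⟨hp, -, hlt⟩
    have hn1 : (1 : ℝ) ≤ |(p.1 : ℝ)| := by exact_mod_cast Int.one_le_abs hp
    have h1 : ‖μ p - model ω β p‖ ≤ C := (hμ p hp).trans (div_le_self hC hn1)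
    have h2 : |β p.2| * |(p.1 : ℝ)| ≤ ‖model ω β p‖ := by
      rw [← abs_mul]
      simpa [model] using Complex.abs_im_le_norm (model ω β p)
    have h3 : ‖model ω β p‖ ≤ ‖μ p - model ω β p‖ + ‖μ p - μ p₀‖ + ‖μ p₀‖ := by
      calc ‖model ω β p‖ = ‖(μ p - μ p₀) - (μ p - model ω β p) + μ p₀‖ := by ring_nf
        _ ≤ ‖μ p - μ p₀‖ + ‖μ p - model ω β p‖ + ‖μ p₀‖ :=
            (norm_add_le _ _).trans (by gcongr; exact norm_sub_le _ _)
        _ = _ := by ring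
    have h4 : |(p.1 : ℝ)| ≤ B := by
      refine le_trans ?_ (hB p.2)
      rw [le_div_iff₀ (abs_pos.2 (hβ p.2)), mul_comm]
      linarith
    have h5 : |p.1| ≤ (B : ℤ) := by exact_mod_cast h4
    simpa using abs_le.1 h5
  obtain ⟨γ, hγ, hγle⟩ := hfin.isCompact.exists_forall_le' (f := fun p => ‖μ p - μ p₀‖) (a := 0)
    (continuous_of_discreteTopology.continuousOn)
    (fun p hp => norm_pos_iff.2 (sub_ne_zero.2 (hinj p p₀ hp.1 hp₀ hp.2.1)))
  refine ⟨min γ 1, lt_min hγ one_pos, fun p hp hne => ?_⟩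
  by_cases h : ‖μ p - μ p₀‖ < 1
  · exact (min_le_left _ _).trans (hγle p ⟨hp, hne, h⟩)
  · exact (min_le_right _ _).trans (not_lt.1 h)

lemma re_bound (hC : 0 ≤ C)
    (hμ : ∀ p : ℤ × Fin 3, p.1 ≠ 0 → ‖μ p - model ω β p‖ ≤ C / |(p.1 : ℝ)|)
    (p : ℤ × Fin 3) (hp : p.1 ≠ 0) : |(μ p).re| ≤ (∑ j, |ω j|) + C := by
  have hn1 : (1 : ℝ) ≤ |(p.1 : ℝ)| := by exact_mod_cast Int.one_le_abs hp
  have h1 : ‖μ p - model ω β p‖ ≤ C := (hμ p hp).trans (div_le_self hC hn1)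
  have h2 : |(μ p).re - ω p.2| ≤ C := by
    refine le_trans ?_ h1
    simpa [model] using Complex.abs_re_le_norm (μ p - model ω β p)
  have h3 : |ω p.2| ≤ ∑ j, |ω j| :=
    Finset.single_le_sum (f := fun j => |ω j|) (fun _ _ => abs_nonneg _) (Finset.mem_univ _)
  have h4 := abs_add_le ((μ p).re - ω p.2) (ω p.2)
  rw [sub_add_cancel] at h4
  linarith

/-- The perturbation is square summable: with `w_n^j` a constant multiple of `1/n²` the hypotheses
of `UpperIneq.perturb` and `LowerIneq.perturb` hold. -/
lemma exists_weight (hC : 0 ≤ C)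
    (hμ : ∀ p : ℤ × Fin 3, p.1 ≠ 0 → ‖μ p - model ω β p‖ ≤ C / |(p.1 : ℝ)|) {L : ℝ} (hL : 0 ≤ L) :
    ∃ w : ℤ × Fin 3 → ℝ, Summable w ∧ (∀ p, 0 ≤ w p) ∧ ∀ p ∈ {p : ℤ × Fin 3 | p.1 ≠ 0},
      ∀ t ∈ Set.Icc 0 L, ‖exp (μ p * t) - exp (model ω β p * t)‖ ^ 2 ≤ w p := by
  set R := ∑ j, |ω j|
  set K := Real.exp (R * L) * Real.exp (C * L) * L * C with hK
  refine ⟨fun p => K ^ 2 * (1 / (p.1 : ℝ) ^ 2 * 1), ?_, fun p => by positivity,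
    fun p hp t ht => ?_⟩
  · refine Summable.mul_left _ ?_
    exact (Real.summable_one_div_int_pow.2 one_lt_two).mul_of_nonneg
      (g := fun _ : Fin 3 => (1 : ℝ)) (Summable.of_finite) (fun _ => by positivity)
      (fun _ => zero_le_one)
  · have hn1 : (1 : ℝ) ≤ |(p.1 : ℝ)| := by exact_mod_cast Int.one_le_abs hp
    have hre : |(model ω β p).re| ≤ R := by
      simpa [model] using Finset.single_le_sum (f := fun j => |ω j|)
        (fun _ _ => abs_nonneg _) (Finset.mem_univ p.2)
    have h1 := norm_exp_sub_exp_le hre ((hμ p hp).trans (div_le_self hC hn1)) ht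
    have h2 : ‖exp (μ p * t) - exp (model ω β p * t)‖ ≤ K / |(p.1 : ℝ)| := by
      refine h1.trans ?_
      rw [hK, mul_div_assoc]
      exact mul_le_mul_of_nonneg_left (hμ p hp) (by positivity)
    calc _ ≤ (K / |(p.1 : ℝ)|) ^ 2 := by gcongr
      _ = _ := by rw [div_pow, sq_abs]; ring

lemma upper_of_asymptotic (hβ : ∀ j, β j ≠ 0) (hC : 0 ≤ C)
    (hμ : ∀ p : ℤ × Fin 3, p.1 ≠ 0 → ‖μ p - model ω β p‖ ≤ C / |(p.1 : ℝ)|) {L : ℝ} (hL : 0 < L) :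
    UpperIneq μ {p | p.1 ≠ 0} L := by
  obtain ⟨w, hw, hw0, h⟩ := exists_weight hC hμ hL.le
  obtain ⟨K, hK0, hK⟩ := model_upper (ω := ω) hβ L hL
  exact UpperIneq.perturb hL.le hw hw0 h ⟨K, hK0, fun S _ a => hK S (fun _ _ => trivial) a⟩

lemma lower_of_asymptotic (hω : Function.Injective ω) (hβ : ∀ j, β j ≠ 0) (hC : 0 ≤ C)
    (hμ : ∀ p : ℤ × Fin 3, p.1 ≠ 0 → ‖μ p - model ω β p‖ ≤ C / |(p.1 : ℝ)|)
    (hinj : ∀ p q : ℤ × Fin 3, p.1 ≠ 0 → q.1 ≠ 0 → p ≠ q → μ p ≠ μ q) {L : ℝ}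
    (hL : period β 0 + period β 1 + period β 2 < L) :
    LowerIneq μ {p | p.1 ≠ 0} L := by
  classical
  set L₀ := period β 0 + period β 1 + period β 2 with hL₀
  have hL₀0 : 0 ≤ L₀ := by
    have h0 := period_pos hβ 0
    have h1 := period_pos hβ 1
    have h2 := period_pos hβ 2
    positivity
  obtain ⟨w, hw, hw0, h⟩ := exists_weight hC hμ hL₀0
  obtain ⟨K, hK0, hK⟩ := model_lower hω hβ (L := L₀) le_rfl
  obtain ⟨E, K', hK'0, hK'⟩ := LowerIneq.perturb (P := {p | p.1 ≠ 0}) hL₀0 hw h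
    ⟨K, hK0, fun S _ a => hK S (fun _ _ => trivial) a⟩
  -- The finitely many exceptional exponents are put back one at a time.
  have key : ∀ F : Finset (ℤ × Fin 3), ∀ L, L₀ < L →
      LowerIneq μ {p | p.1 ≠ 0 ∧ (p ∉ E ∨ p ∈ F)} L := by
    intro F
    induction F using Finset.induction_on with
    | empty =>
      intro L hL
      refine ⟨K', hK'0, fun S hS a => (hK' S (fun p hp => ?_) a).trans ?_⟩
      · simpa using hS p hp
      · gcongr
        exact integral_le_energy le_rfl hL₀0 hL.le
    | insert x F hx ih =>
      intro L hL
      by_cases hold : x.1 = 0 ∨ x ∉ E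
      · obtain ⟨K, hK0, hK⟩ := ih L hL
        refine ⟨K, hK0, fun S hS a => hK S (fun p hp => ?_) a⟩
        obtain ⟨h1, h2⟩ := hS p hp
        refine ⟨h1, ?_⟩
        rcases h2 with h2 | h2
        · exact Or.inl h2
        · rcases Finset.mem_insert.1 h2 with rfl | h2
          · exact Or.inl (hold.resolve_left h1)
          · exact Or.inr h2
      · push Not at hold
        obtain ⟨hx0, hxE⟩ := hold
        obtain ⟨γ, hγ, hgap⟩ := exists_gap hβ hC hμ hinj hx0
        obtain ⟨M, hM1, hM2⟩ := exists_between hL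
        have hup := upper_of_asymptotic hβ hC hμ (hL₀0.trans_lt hL)
        have hins := LowerIneq.insert (p₀ := x) (R := (∑ j, |ω j|) + C)
          (P := {p | p.1 ≠ 0 ∧ (p ∉ E ∨ p ∈ F)}) (by
            rintro p (hp | rfl)
            · exact re_bound hC hμ p hp.1
            · exact re_bound hC hμ p hx0) hγ (by
            rintro p ⟨hp0, hp⟩
            refine hgap p hp0 ?_
            rintro rfl
            exact hp.elim (fun h => h hxE) hx) (hL₀0.trans hM1.le) hM2 (by
            obtain ⟨K, hK0, hK⟩ := hup
            exact ⟨K, hK0, fun S hS a => hK S (fun p hp => (hS p hp).1) a⟩) (ih M hM1)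
        obtain ⟨K, hK0, hK⟩ := hins
        refine ⟨K, hK0, fun S hS a => hK S (fun p hp => ?_) a⟩
        obtain ⟨h1, h2⟩ := hS p hp
        rcases h2 with h2 | h2
        · exact Or.inr ⟨h1, Or.inl h2⟩
        · rcases Finset.mem_insert.1 h2 with rfl | h2
          · exact Or.inl rfl
          · exact Or.inr ⟨h1, Or.inr h2⟩
  obtain ⟨K, hK0, hK⟩ := key E L hL
  exact ⟨K, hK0, fun S hS a => hK S (fun p hp => ⟨hS p hp, (em (p ∈ E)).symm⟩) a⟩

/-- An asymptotic bound for large indices holds for all nonzero indices with a larger constant. -/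
lemma exists_uniform_bound {d : ℤ × Fin 3 → ℝ} (hd : ∀ p, 0 ≤ d p) {C : ℝ} {N : ℕ}
    (h : ∀ p : ℤ × Fin 3, p.1 ≠ 0 → (N : ℤ) < |p.1| → d p ≤ C / |(p.1 : ℝ)|) :
    ∃ C' : ℝ, 0 ≤ C' ∧ ∀ p : ℤ × Fin 3, p.1 ≠ 0 → d p ≤ C' / |(p.1 : ℝ)| := by
  set F : Finset (ℤ × Fin 3) := Finset.Icc (-(N : ℤ)) N ×ˢ Finset.univ
  have hnn : ∀ p ∈ F, 0 ≤ d p * |(p.1 : ℝ)| := fun p _ => mul_nonneg (hd p) (abs_nonneg _)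
  refine ⟨|C| + ∑ p ∈ F, d p * |(p.1 : ℝ)|,
    add_nonneg (abs_nonneg _) (Finset.sum_nonneg hnn), fun p hp => ?_⟩
  have hpos : 0 < |(p.1 : ℝ)| := abs_pos.2 (by exact_mod_cast hp)
  rcases lt_or_ge (N : ℤ) |p.1| with hN | hN
  · refine (h p hp hN).trans ?_
    gcongr
    linarith [le_abs_self C, Finset.sum_nonneg hnn]
  · rw [le_div_iff₀ hpos]
    have hpF : p ∈ F := by simpa [F] using abs_le.1 hN
    linarith [Finset.single_le_sum hnn hpF, abs_nonneg C]

/-- Passing from `[0, T]` to the symmetric interval changes the coefficients by `e^{-μ_p T/2}`. -/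
lemma integral_symm_eq_energy (S : Finset (ℤ × Fin 3)) (a : ℤ × Fin 3 → ℂ) (T : ℝ) :
    ∫ t in (-(T / 2))..(T / 2), ‖expSum μ S a t‖ ^ 2
      = energy μ S (fun p => a p * exp (-(μ p * (T / 2)))) T := by
  have h : ∀ t : ℝ, expSum μ S (fun p => a p * exp (-(μ p * (T / 2)))) t
      = expSum μ S a (t - T / 2) := by
    intro t
    unfold expSum
    refine Finset.sum_congr rfl fun p _ => ?_
    rw [mul_assoc, ← Complex.exp_add]
    congr 2
    push_cast
    ring
  unfold energy
  simp_rw [h]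
  rw [intervalIntegral.integral_comp_sub_right (fun t => ‖expSum μ S a t‖ ^ 2) (T / 2)]
  congr 1 <;> ring

end Exponents

/-- Hyperbolic Ingham-type inequality for the family `{e^{-conj(λ_n^j) t}}`. -/
theorem stmt_13 (ω β : Fin 3 → ℝ)
    (hωdist : Function.Injective ω)
    (hβdist : Function.Injective β) (hβne : ∀ j, β j ≠ 0)
    (lam : ℤ → Fin 3 → ℂ)
    (hdist : ∀ n k : ℤ, ∀ j l : Fin 3, n ≠ 0 → k ≠ 0 → (n, j) ≠ (k, l) →
      lam n j ≠ lam k l)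
    (hasymp : ∃ C : ℝ, ∃ N : ℕ, ∀ n : ℤ, n ≠ 0 → (N : ℤ) < |n| → ∀ j : Fin 3,
      ‖lam n j - ((-(ω j) : ℂ) + Complex.I * (β j) * n)‖ ≤ C / |(n : ℝ)|)
    (T : ℝ) (hT : 2 * Real.pi * (1/|β 0| + 1/|β 1| + 1/|β 2|) < T) :
    ∃ C₁ C₂ : ℝ, 0 < C₁ ∧ 0 < C₂ ∧
      ∀ S : Finset (ℤ × Fin 3), (∀ p ∈ S, p.1 ≠ 0) → ∀ a : ℤ × Fin 3 → ℂ,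
        C₁ * ∑ p ∈ S, ‖a p‖^2 ≤
          (∫ t in (-(T/2))..(T/2),
            ‖∑ p ∈ S, a p * Complex.exp (-(starRingEnd ℂ) (lam p.1 p.2) * t)‖^2) ∧
        (∫ t in (-(T/2))..(T/2),
            ‖∑ p ∈ S, a p * Complex.exp (-(starRingEnd ℂ) (lam p.1 p.2) * t)‖^2) ≤
          C₂ * ∑ p ∈ S, ‖a p‖^2 := by
  set μ : ℤ × Fin 3 → ℂ := fun p => -(starRingEnd ℂ) (lam p.1 p.2) with hμdef
  obtain ⟨C₀, N, hN⟩ := hasymp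
  obtain ⟨C, hC, hμ⟩ : ∃ C : ℝ, 0 ≤ C ∧ ∀ p : ℤ × Fin 3, p.1 ≠ 0 →
      ‖μ p - model ω β p‖ ≤ C / |(p.1 : ℝ)| := by
    refine exists_uniform_bound (fun p => norm_nonneg _) (C := C₀) (N := N) fun p hp hpN => ?_
    refine le_of_eq_of_le ?_ (hN p.1 hp hpN p.2)
    have : μ p - model ω β p = -(starRingEnd ℂ)
        (lam p.1 p.2 - ((-(ω p.2) : ℂ) + Complex.I * (β p.2) * p.1)) := by
      simp only [hμdef, model, map_sub, map_add, map_mul, map_neg, Complex.conj_I,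
        Complex.conj_ofReal, map_intCast]
      ring
    rw [this, norm_neg, Complex.norm_conj]
  have hinj : ∀ p q : ℤ × Fin 3, p.1 ≠ 0 → q.1 ≠ 0 → p ≠ q → μ p ≠ μ q := by
    intro p q hp hq hpq h
    exact hdist p.1 q.1 p.2 q.2 hp hq hpq ((starRingEnd ℂ).injective (neg_injective h))
  have hT' : period β 0 + period β 1 + period β 2 < T := by
    refine lt_of_eq_of_lt ?_ hT
    unfold period
    ring
  have hT0 : 0 < T := by
    have h0 := period_pos hβne 0
    have h1 := period_pos hβne 1
    have h2 := period_pos hβne 2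
    linarith
  obtain ⟨K, hK0, hK⟩ := lower_of_asymptotic hωdist hβne hC hμ hinj hT'
  obtain ⟨K', hK'0, hK'⟩ := upper_of_asymptotic hβne hC hμ hT0
  set R := (∑ j, |ω j|) + C
  set M := Real.exp (R * T) with hM
  have hM0 : 0 < M := Real.exp_pos _
  refine ⟨(K * M)⁻¹, K' * M, by positivity, by positivity, fun S hS a => ?_⟩
  have hint := integral_symm_eq_energy (μ := μ) S a T
  simp only [expSum, hμdef] at hint
  rw [hint]
  set b : ℤ × Fin 3 → ℂ := fun p => a p * exp (-(μ p * (T / 2))) with hb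
  change (K * M)⁻¹ * ∑ p ∈ S, ‖a p‖ ^ 2 ≤ energy μ S b T ∧
    energy μ S b T ≤ K' * M * ∑ p ∈ S, ‖a p‖ ^ 2
  have hnorm : ∀ p, ‖b p‖ ^ 2 = ‖a p‖ ^ 2 * Real.exp (-((μ p).re * T)) := by
    intro p
    simp only [hb]
    rw [norm_mul, mul_pow, Complex.norm_exp, ← Real.exp_nat_mul]
    congr 2
    have : (μ p * (T / 2)).re = (μ p).re * (T / 2) := by
      rw [show (T / 2 : ℂ) = ((T / 2 : ℝ) : ℂ) by push_cast; rfl, Complex.re_mul_ofReal]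
    rw [Complex.neg_re, this]
    push_cast
    ring
  have hre : ∀ p ∈ S, |(μ p).re * T| ≤ R * T := fun p hp => by
    rw [abs_mul, abs_of_pos hT0]
    exact mul_le_mul_of_nonneg_right (re_bound hC hμ p (hS p hp)) hT0.le
  have hab : ∑ p ∈ S, ‖a p‖ ^ 2 ≤ M * ∑ p ∈ S, ‖b p‖ ^ 2 := by
    rw [Finset.mul_sum]
    refine Finset.sum_le_sum fun p hp => ?_
    rw [hnorm, mul_left_comm, hM, ← Real.exp_add]
    refine le_mul_of_one_le_right (by positivity) (Real.one_le_exp ?_)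
    linarith [le_abs_self ((μ p).re * T), hre p hp]
  have hba : ∑ p ∈ S, ‖b p‖ ^ 2 ≤ M * ∑ p ∈ S, ‖a p‖ ^ 2 := by
    rw [Finset.mul_sum]
    refine Finset.sum_le_sum fun p hp => ?_
    rw [hnorm, mul_comm M]
    refine mul_le_mul_of_nonneg_left (Real.exp_le_exp.2 ?_) (by positivity)
    linarith [neg_abs_le ((μ p).re * T), hre p hp]
  constructor
  · rw [inv_mul_le_iff₀ (by positivity)]
    calc _ ≤ M * ∑ p ∈ S, ‖b p‖ ^ 2 := hab
      _ ≤ M * (K * energy μ S b T) := by gcongr; exact hK S hS b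
      _ = _ := by ring
  · calc _ ≤ K' * ∑ p ∈ S, ‖b p‖ ^ 2 := hK' S hS b
      _ ≤ K' * (M * ∑ p ∈ S, ‖a p‖ ^ 2) := by gcongr
      _ = _ := by ring
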